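/- Let K be a compact subset of ℝ^N, let E be an ordered Banach space, and let i : C(K) → E be an injective positive linear map with dense image, via which C(K) is identified with a subspace of E. Let X be a compact Hausdorff space and let T_n (n ∈ ℕ) and A be operators from E into C(X) that are sublinear, monotone, and translatable with respect to e = i(1). Assume (i) A(e)(t) > 0 for every t ∈ X; (ii) for some α ≥ α(K,u), A(e)·A(i(p)) = Σ_{k=1}^N (A(i(q_k)))², where p = Σ_{k=1}^N (pr_k + α)² and q_k = −pr_k − α; and (iii) sup_n ‖T_n‖ < ∞, where ‖T‖ = sup{‖T(f)‖ : ‖f‖ ≤ 1}. Then lim_{n→∞} ‖T_n(f) − A(f)‖ = 0 for every f ∈ E if and only if lim_{n→∞} ‖T_n(g) − A(g)‖ = 0 for each of the N+2 test elements g ∈ {e, i(q_1), …, i(q_N), i(p)} (sup-norm on C(X)). -/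

import Mathlib

open Filter

/-- The restriction to `K ⊆ ℝ^N` of the `k`-th coordinate projection, as a continuous map. -/
noncomputable def coordCM {N : ℕ} (K : Set (EuclideanSpace ℝ (Fin N))) (k : Fin N) : C(K, ℝ) :=
  ⟨fun x => (x : EuclideanSpace ℝ (Fin N)) k,
    (EuclideanSpace.proj k).continuous.comp continuous_subtype_val⟩

/-- The deficit of positivity `α(K, u)` of `K ⊆ ℝ^N` in the direction `u = (1, …, 1)`:
the infimum of all `α ≥ 0` with `K + αu ⊆ ℝ₊^N`. -/
noncomputable def posDeficit {N : ℕ} (K : Set (EuclideanSpace ℝ (Fin N))) : ℝ :=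
  sInf {a : ℝ | 0 ≤ a ∧ ∀ x ∈ K, ∀ k : Fin N, 0 ≤ x k + a}

/-- `p = Σ_{k=1}^N (pr_k + α)²` as an element of `C(K)`. -/
noncomputable def testP {N : ℕ} (K : Set (EuclideanSpace ℝ (Fin N))) (α : ℝ) : C(K, ℝ) :=
  ∑ k : Fin N, (coordCM K k + ContinuousMap.const K α) ^ 2

/-- `q_k = −pr_k − α` as an element of `C(K)`. -/
noncomputable def testQ {N : ℕ} (K : Set (EuclideanSpace ℝ (Fin N))) (α : ℝ) (k : Fin N) :
    C(K, ℝ) :=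
  -(coordCM K k) - ContinuousMap.const K α

theorem kor_dominate {E : Type*} [NormedAddCommGroup E] [NormedSpace ℝ E] [CompleteSpace E]
    [PartialOrder E] [IsOrderedAddMonoid E] [OrderClosedTopology E]
    (hsm : ∀ (c : ℝ) (x : E), 0 ≤ c → 0 ≤ x → 0 ≤ c • x)
    (hgen : ∀ x : E, ∃ u v : E, 0 ≤ u ∧ 0 ≤ v ∧ x = u - v) :
    ∃ C : ℝ, 0 ≤ C ∧ ∀ x : E, ∃ u : E, 0 ≤ u ∧ x ≤ u ∧ -x ≤ u ∧ ‖u‖ ≤ C * ‖x‖ := by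
  classical
  let S := {x : E // 0 ≤ x ∧ ‖x‖ ≤ 1}
  have hs1 : ∀ a : lp (fun _ : S => ℝ) 1, Summable (fun s => ‖a s‖) := by
    intro a
    have := (lp.memℓp a).summable (by norm_num)
    simpa using this
  have hn1 : ∀ a : lp (fun _ : S => ℝ) 1, ‖a‖ = ∑' s, ‖a s‖ := by
    intro a
    have := lp.norm_eq_tsum_rpow (p := 1) (by norm_num) a
    simpa using this
  have hb : ∀ (c : ℝ) (s : S), ‖c • (s : E)‖ ≤ ‖c‖ := by
    intro c s
    rw [norm_smul]
    exact mul_le_of_le_one_right (norm_nonneg _) s.2.2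
  have hs2 : ∀ a : lp (fun _ : S => ℝ) 1, Summable (fun s : S => a s • (s : E)) := fun a =>
    Summable.of_norm_bounded (hs1 a) (fun s => hb _ s)
  have hs3 : ∀ a : lp (fun _ : S => ℝ) 1, Summable (fun s : S => |a s| • (s : E)) := fun a =>
    Summable.of_norm_bounded (hs1 a) (fun s => (hb _ s).trans (by simp))
  let L0 : lp (fun _ : S => ℝ) 1 →ₗ[ℝ] E :=
    { toFun := fun a => ∑' s : S, a s • (s : E)
      map_add' := by
        intro a b
        rw [← (hs2 a).tsum_add (hs2 b)]
        congr 1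
        funext s
        simp [add_smul]
      map_smul' := by
        intro c a
        simp only [RingHom.id_apply]
        rw [← (hs2 a).tsum_const_smul c]
        congr 1
        funext s
        simp [mul_smul] }
  let L : lp (fun _ : S => ℝ) 1 →L[ℝ] E := L0.mkContinuous 1 (by
    intro a
    rw [one_mul, hn1]
    exact tsum_of_norm_bounded (hs1 a).hasSum (fun s => hb _ s))
  have hL : ∀ a, L a = ∑' s : S, a s • (s : E) := fun a => rfl
  have hpos : ∀ u : E, 0 ≤ u → ∃ a, L a = u := by
    intro u hu
    by_cases h0 : u = 0
    · exact ⟨0, by rw [map_zero, h0]⟩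
    have hne : ‖u‖ ≠ 0 := norm_ne_zero_iff.2 h0
    let s : S := ⟨‖u‖⁻¹ • u, hsm _ _ (by positivity) hu, by
      rw [norm_smul, norm_inv, norm_norm, inv_mul_cancel₀ hne]⟩
    refine ⟨lp.single 1 s ‖u‖, ?_⟩
    rw [hL, tsum_eq_single s]
    · simp [s, smul_smul, hne]
    · intro b hb
      simp [lp.single_apply, hb]
  have hsurj : Function.Surjective L := by
    intro x
    obtain ⟨u, v, hu, hv, rfl⟩ := hgen x
    obtain ⟨a, rfl⟩ := hpos u hu
    obtain ⟨b, rfl⟩ := hpos v hv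
    exact ⟨a - b, map_sub _ _ _⟩
  obtain ⟨C, hC, h⟩ := L.exists_preimage_norm_le hsurj
  refine ⟨C, hC.le, fun x => ?_⟩
  obtain ⟨a, ha, hna⟩ := h x
  have key : ∀ (c d : ℝ) (s : S), c ≤ d → c • (s : E) ≤ d • (s : E) := by
    intro c d s hcd
    have := hsm (d - c) s (by linarith) s.2.1
    rw [sub_smul] at this
    exact sub_nonneg.1 this
  refine ⟨∑' s : S, |a s| • (s : E), tsum_nonneg fun s => hsm _ _ (abs_nonneg _) s.2.1, ?_, ?_, ?_⟩
  · rw [← ha, hL]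
    exact (hs2 a).tsum_le_tsum (fun s => key _ _ s (le_abs_self _)) (hs3 a)
  · rw [← ha, hL, ← tsum_neg]
    refine (hs2 a).neg.tsum_le_tsum (fun s => ?_) (hs3 a)
    rw [← neg_smul]
    exact key _ _ s (neg_le_abs _)
  · refine le_trans ?_ hna
    rw [hn1]
    exact tsum_of_norm_bounded (hs1 a).hasSum (fun s => (hb _ s).trans (by simp))

theorem kor_norm_le {X : Type*} [TopologicalSpace X] [CompactSpace X] (f g : C(X, ℝ))
    (h1 : f ≤ g) (h2 : -f ≤ g) : ‖f‖ ≤ ‖g‖ := by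
  rw [ContinuousMap.norm_le _ (norm_nonneg _)]
  intro t
  have a : f t ≤ g t := h1 t
  have b : -f t ≤ g t := h2 t
  have c := (le_abs_self _).trans (g.norm_coe_le_norm t)
  rw [Real.norm_eq_abs]
  exact abs_le.2 ⟨by linarith, by linarith⟩

theorem kor_bdd {E : Type*} [NormedAddCommGroup E] [NormedSpace ℝ E] [CompleteSpace E]
    [PartialOrder E] [IsOrderedAddMonoid E] [OrderClosedTopology E]
    (hsm : ∀ (c : ℝ) (x : E), 0 ≤ c → 0 ≤ x → 0 ≤ c • x)
    (hgen : ∀ x : E, ∃ u v : E, 0 ≤ u ∧ 0 ≤ v ∧ x = u - v)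
    {X : Type*} [TopologicalSpace X] [CompactSpace X] (A : E → C(X, ℝ))
    (hAsub : ∀ f g : E, A (f + g) ≤ A f + A g)
    (hApos : ∀ (a : ℝ), 0 ≤ a → ∀ f : E, A (a • f) = a • A f)
    (hAmono : Monotone A) : ∃ M : ℝ, 0 ≤ M ∧ ∀ f, ‖A f‖ ≤ M * ‖f‖ := by
  have hA0 : A 0 = 0 := by simpa using hApos 0 le_rfl 0
  have hpm : ∀ u v : E, 0 ≤ u → u ≤ v → ‖A u‖ ≤ ‖A v‖ := by
    intro u v hu huv
    have h1 := hAmono hu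
    rw [hA0] at h1
    exact kor_norm_le _ _ (hAmono huv) ((neg_nonpos.2 h1).trans (h1.trans (hAmono huv)))
  have hP : ∃ M : ℝ, 0 ≤ M ∧ ∀ u : E, 0 ≤ u → ‖A u‖ ≤ M * ‖u‖ := by
    by_contra! hcon
    choose u hu hu2 using fun n : ℕ => hcon (4 ^ n) (by positivity)
    have hne : ∀ n, 0 < ‖u n‖ := by
      intro n
      refine norm_pos_iff.2 fun h => ?_
      have := hu2 n
      rw [h, hA0] at this
      simp at this
    let w : ℕ → E := fun n => ((2 ^ n * ‖u n‖)⁻¹ : ℝ) • u n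
    have hw0 : ∀ n, 0 ≤ w n := fun n => hsm _ _ (by positivity) (hu n)
    have hwn : ∀ n, ‖w n‖ = (1 / 2) ^ n := by
      intro n
      have := hne n
      simp only [w, norm_smul, norm_inv, norm_mul, norm_pow, norm_norm]
      rw [Real.norm_ofNat, one_div, inv_pow]
      field_simp
    have hwA : ∀ n, (2 : ℝ) ^ n < ‖A (w n)‖ := by
      intro n
      have h1 := hne n
      have h2 := hu2 n
      simp only [w]
      rw [hApos _ (by positivity), norm_smul, Real.norm_of_nonneg (by positivity),
        inv_mul_eq_div, lt_div_iff₀ (by positivity)]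
      calc (2 : ℝ) ^ n * (2 ^ n * ‖u n‖) = 4 ^ n * ‖u n‖ := by
            rw [← mul_assoc, ← mul_pow]; norm_num
        _ < _ := h2
    have hsum : Summable w := by
      refine Summable.of_norm ?_
      simp_rw [hwn]
      exact summable_geometric_two
    have hle : ∀ n, w n ≤ ∑' n, w n := fun n => le_hasSum hsum.hasSum n fun j _ => hw0 j
    obtain ⟨n, hn⟩ := pow_unbounded_of_one_lt ‖A (∑' n, w n)‖ (one_lt_two)
    exact absurd (hn.trans (hwA n)) (not_lt.2 (hpm _ _ (hw0 n) (hle n)))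
  obtain ⟨M, hM, hM2⟩ := hP
  obtain ⟨C, hC, hd⟩ := kor_dominate hsm hgen
  refine ⟨M * C, by positivity, fun x => ?_⟩
  obtain ⟨u, hu, h1, h2, h3⟩ := hd x
  have h4 : -A x ≤ A u := by
    have := hAsub x (-x)
    rw [add_neg_cancel, hA0] at this
    exact (neg_le_iff_add_nonneg'.2 this).trans (hAmono h2)
  calc ‖A x‖ ≤ ‖A u‖ := kor_norm_le _ _ (hAmono h1) h4
    _ ≤ M * ‖u‖ := hM2 u hu
    _ ≤ M * (C * ‖x‖) := by gcongr
    _ = _ := by ring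

theorem kor_pos {N : ℕ} (K : Set (EuclideanSpace ℝ (Fin N))) [CompactSpace K] (α : ℝ)
    (hα : posDeficit K ≤ α) (x : K) (k : Fin N) : 0 ≤ (x : EuclideanSpace ℝ (Fin N)) k + α := by
  have hK : IsCompact K := isCompact_iff_compactSpace.2 inferInstance
  obtain ⟨R, hR⟩ := hK.isBounded.exists_norm_le
  have : -(x : EuclideanSpace ℝ (Fin N)) k ≤ posDeficit K := by
    refine le_csInf ⟨|R|, abs_nonneg _, fun y hy j => ?_⟩ fun a ha => ?_
    · have h1 := PiLp.norm_apply_le y j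
      have h2 := hR y hy
      have h3 := neg_abs_le (y j)
      rw [Real.norm_eq_abs] at h1
      have := le_abs_self R
      linarith
    · have := ha.2 x x.2 k
      linarith
  linarith

noncomputable def korD {N : ℕ} (K : Set (EuclideanSpace ℝ (Fin N))) (α : ℝ) (σ : Fin N → ℝ) :
    C(K, ℝ) :=
  (testP K α + ∑ k, (2 * σ k) • testQ K α k) + (∑ k, σ k ^ 2) • (1 : C(K, ℝ))

theorem korD_apply {N : ℕ} (K : Set (EuclideanSpace ℝ (Fin N))) (α : ℝ) (σ : Fin N → ℝ) (x : K) :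
    korD K α σ x = ∑ k, ((x : EuclideanSpace ℝ (Fin N)) k + α - σ k) ^ 2 := by
  simp only [korD, testP, testQ, ContinuousMap.add_apply, ContinuousMap.sum_apply,
    ContinuousMap.smul_apply, ContinuousMap.pow_apply, ContinuousMap.sub_apply,
    ContinuousMap.neg_apply, ContinuousMap.one_apply, ContinuousMap.const_apply, smul_eq_mul,
    mul_one]
  have hx : ∀ k, coordCM K k x = (x : EuclideanSpace ℝ (Fin N)) k := fun k => rfl
  simp only [hx]
  rw [← Finset.sum_add_distrib, ← Finset.sum_add_distrib]
  refine Finset.sum_congr rfl fun k _ => ?_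
  ring

theorem kor_sum_le {N : ℕ} {V : Type*} [AddCommGroup V] [Module ℝ V] (φ : V → ℝ)
    (hsub : ∀ f g, φ (f + g) ≤ φ f + φ g) (hpos : ∀ a : ℝ, 0 ≤ a → ∀ f, φ (a • f) = a * φ f)
    (c : Fin N → ℝ) (hc : ∀ k, 0 ≤ c k) (g : Fin N → V) :
    φ (∑ k, c k • g k) ≤ ∑ k, c k * φ (g k) := by
  have h0 : φ 0 = 0 := by simpa using hpos 0 le_rfl 0
  refine (Finset.le_sum_of_subadditive φ h0.le hsub _ _).trans ?_
  exact Finset.sum_le_sum fun k _ => (hpos _ (hc k) _).le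

theorem korD_le {N : ℕ} (K : Set (EuclideanSpace ℝ (Fin N))) (α : ℝ) (σ : Fin N → ℝ)
    (hσ : ∀ k, 0 ≤ σ k) (φ : C(K, ℝ) → ℝ)
    (hsub : ∀ f g, φ (f + g) ≤ φ f + φ g) (hpos : ∀ a : ℝ, 0 ≤ a → ∀ f, φ (a • f) = a * φ f) :
    φ (korD K α σ) ≤ φ (testP K α) + ∑ k, 2 * σ k * φ (testQ K α k) + (∑ k, σ k ^ 2) * φ 1 := by
  have h1 := hsub (testP K α + ∑ k, (2 * σ k) • testQ K α k) ((∑ k, σ k ^ 2) • (1 : C(K, ℝ)))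
  have h2 := hsub (testP K α) (∑ k, (2 * σ k) • testQ K α k)
  have h3 := kor_sum_le φ hsub hpos (fun k => 2 * σ k) (fun k => by have := hσ k; positivity)
    (fun k => testQ K α k)
  rw [hpos _ (Finset.sum_nonneg fun k _ => sq_nonneg _)] at h1
  unfold korD
  linarith

theorem kor_pt {N : ℕ} (K : Set (EuclideanSpace ℝ (Fin N))) (α : ℝ) (σ : Fin N → ℝ)
    (φ : C(K, ℝ) → ℝ)
    (hsub : ∀ f g, φ (f + g) ≤ φ f + φ g) (hpos : ∀ a : ℝ, 0 ≤ a → ∀ f, φ (a • f) = a * φ f)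
    (htr : ∀ (a : ℝ) f, φ (f + a • 1) = φ f + a * φ 1) (hmono : Monotone φ)
    (f : C(K, ℝ)) (c ε δ : ℝ) (hδ : 0 ≤ δ) (h : ∀ x, |f x - c| ≤ ε + δ * korD K α σ x) :
    |φ f - c * φ 1| ≤ ε * φ 1 + δ * φ (korD K α σ) := by
  have h0 : φ 0 = 0 := by simpa using hpos 0 le_rfl 0
  have h1 : φ f ≤ δ * φ (korD K α σ) + (c + ε) * φ 1 := by
    rw [← hpos _ hδ, ← htr]
    refine hmono fun x => ?_
    have := (abs_le.1 (h x)).2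
    show f x ≤ δ * korD K α σ x + (c + ε) * 1
    linarith
  have h2 : (c - ε) * φ 1 ≤ φ f + δ * φ (korD K α σ) := by
    have e : (c - ε) * φ 1 = φ (0 + (c - ε) • 1) := by rw [htr, h0, zero_add]
    rw [← hpos _ hδ, e]
    refine le_trans (hmono fun x => ?_) (hsub _ _)
    have := (abs_le.1 (h x)).1
    show 0 + (c - ε) * 1 ≤ f x + δ * korD K α σ x
    linarith
  exact abs_le.2 ⟨by linarith, by linarith⟩

theorem kor_modulus {N : ℕ} (K : Set (EuclideanSpace ℝ (Fin N))) [CompactSpace K] (α : ℝ)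
    (f : C(K, ℝ)) (ε : ℝ) (hε : 0 < ε) : ∃ δ : ℝ, 0 ≤ δ ∧ ∀ s x : K,
      |f x - f s| ≤ ε + δ * korD K α (fun k => (s : EuclideanSpace ℝ (Fin N)) k + α) x := by
  have huc := CompactSpace.uniformContinuous_of_continuous f.continuous
  obtain ⟨η, hη, hu⟩ := Metric.uniformContinuous_iff.1 huc ε hε
  refine ⟨2 * ‖f‖ / η ^ 2, by positivity, fun s x => ?_⟩
  have hd : korD K α (fun k => (s : EuclideanSpace ℝ (Fin N)) k + α) x = dist x s ^ 2 := by
    rw [korD_apply, Subtype.dist_eq, EuclideanSpace.dist_eq,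
      Real.sq_sqrt (Finset.sum_nonneg fun k _ => sq_nonneg _)]
    refine Finset.sum_congr rfl fun k _ => ?_
    rw [Real.dist_eq, sq_abs]
    ring
  rw [hd]
  by_cases hx : dist x s < η
  · have := hu hx
    rw [Real.dist_eq] at this
    have : 0 ≤ 2 * ‖f‖ / η ^ 2 * dist x s ^ 2 := by positivity
    linarith
  · have hx' : η ≤ dist x s := not_lt.1 hx
    have h1 : |f x - f s| ≤ 2 * ‖f‖ := by
      have a := f.norm_coe_le_norm x
      have b := f.norm_coe_le_norm s
      rw [← Real.norm_eq_abs]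
      exact (norm_sub_le _ _).trans (by linarith)
    have h2 : 2 * ‖f‖ ≤ 2 * ‖f‖ / η ^ 2 * dist x s ^ 2 := by
      rw [div_mul_eq_mul_div, le_div_iff₀ (by positivity)]
      gcongr
    linarith

theorem kor_lip {E : Type*} [NormedAddCommGroup E] {X : Type*} [TopologicalSpace X]
    [CompactSpace X] (A : E → C(X, ℝ)) (hAsub : ∀ f g : E, A (f + g) ≤ A f + A g)
    (M : ℝ) (hM : ∀ f, ‖A f‖ ≤ M * ‖f‖) (f g : E) : ‖A f - A g‖ ≤ M * ‖f - g‖ := by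
  have hn : 0 ≤ M * ‖f - g‖ := (norm_nonneg _).trans (hM _)
  rw [ContinuousMap.norm_le _ hn]
  intro t
  have h1 : A (f - g + g) t ≤ A (f - g) t + A g t := hAsub (f - g) g t
  have h2 : A (g - f + f) t ≤ A (g - f) t + A f t := hAsub (g - f) f t
  rw [sub_add_cancel] at h1 h2
  have h3 := (le_abs_self _).trans (((A (f - g)).norm_coe_le_norm t).trans (hM _))
  have h4 := (le_abs_self _).trans (((A (g - f)).norm_coe_le_norm t).trans (hM _))
  rw [norm_sub_rev g f] at h4
  rw [ContinuousMap.sub_apply, Real.norm_eq_abs]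
  exact abs_le.2 ⟨by linarith, by linarith⟩

theorem kor_point {N : ℕ} (K : Set (EuclideanSpace ℝ (Fin N))) [CompactSpace K] (α : ℝ)
    (hα : posDeficit K ≤ α) (φ : C(K, ℝ) → ℝ)
    (hsub : ∀ f g, φ (f + g) ≤ φ f + φ g) (hpos : ∀ a : ℝ, 0 ≤ a → ∀ f, φ (a • f) = a * φ f)
    (hmono : Monotone φ) (h1 : 0 < φ 1)
    (hid : φ 1 * φ (testP K α) = ∑ k, φ (testQ K α k) ^ 2) :
    ∃ s : K, φ (testP K α)
        + ∑ k, 2 * ((s : EuclideanSpace ℝ (Fin N)) k + α) * φ (testQ K α k)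
        + (∑ k, ((s : EuclideanSpace ℝ (Fin N)) k + α) ^ 2) * φ 1 = 0 := by
  have h0 : φ 0 = 0 := by simpa using hpos 0 le_rfl 0
  let σ : Fin N → ℝ := fun k => -φ (testQ K α k) / φ 1
  have hσ : ∀ k, 0 ≤ σ k := by
    intro k
    refine div_nonneg (neg_nonneg.2 ?_) h1.le
    rw [← h0]
    refine hmono fun x => ?_
    have := kor_pos K α hα x k
    show -((x : EuclideanSpace ℝ (Fin N)) k) - α ≤ 0
    linarith
  have hD : φ (testP K α) + ∑ k, 2 * σ k * φ (testQ K α k) + (∑ k, σ k ^ 2) * φ 1 = 0 := by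
    have e1 : ∀ k, φ (testQ K α k) = -(σ k * φ 1) := fun k => by
      simp only [σ]; field_simp
    have e2 : φ (testP K α) = (∑ k, σ k ^ 2) * φ 1 := by
      apply mul_left_cancel₀ h1.ne'
      rw [hid, Finset.sum_mul, Finset.mul_sum]
      refine Finset.sum_congr rfl fun k _ => ?_
      rw [e1]; ring
    rw [e2, Finset.sum_mul, ← Finset.sum_add_distrib, ← Finset.sum_add_distrib]
    refine Finset.sum_eq_zero fun k _ => ?_
    rw [e1]; ring
  have hle := korD_le K α σ hσ φ hsub hpos
  rw [hD] at hle
  have hex : ∃ s : K, korD K α σ s ≤ 0 := by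
    by_contra! hcon
    have hc : ∃ c : ℝ, 0 < c ∧ ∀ x, c ≤ korD K α σ x := by
      rcases isEmpty_or_nonempty K with hK | hK
      · exact ⟨1, one_pos, fun x => (hK.false x).elim⟩
      · obtain ⟨x, hx⟩ := (korD K α σ).continuous.exists_forall_le_of_hasCompactSupport
          (HasCompactSupport.of_compactSpace _)
        exact ⟨_, hcon x, hx⟩
    obtain ⟨c, hc, hc2⟩ := hc
    have : c * φ 1 ≤ φ (korD K α σ) := by
      rw [← hpos c hc.le]
      refine hmono fun x => ?_
      show c * 1 ≤ korD K α σ x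
      rw [mul_one]; exact hc2 x
    have := mul_pos hc h1
    linarith
  obtain ⟨s, hs⟩ := hex
  refine ⟨s, ?_⟩
  rw [korD_apply] at hs
  have hz := (Finset.sum_eq_zero_iff_of_nonneg (fun k _ => sq_nonneg _)).1
    (le_antisymm hs (Finset.sum_nonneg fun k _ => sq_nonneg _))
  have e : ∀ k, (s : EuclideanSpace ℝ (Fin N)) k + α = σ k := fun k =>
    sub_eq_zero.1 (pow_eq_zero_iff (two_ne_zero)|>.1 (hz k (Finset.mem_univ k)))
  simp only [e]
  exact hD

theorem kor_est {N : ℕ} (K : Set (EuclideanSpace ℝ (Fin N))) [CompactSpace K] (α : ℝ)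
    (hα : posDeficit K ≤ α) (φ ψ : C(K, ℝ) → ℝ)
    (hsub : ∀ f g, φ (f + g) ≤ φ f + φ g) (hpos : ∀ a : ℝ, 0 ≤ a → ∀ f, φ (a • f) = a * φ f)
    (htr : ∀ (a : ℝ) f, φ (f + a • 1) = φ f + a * φ 1)
    (hmono : Monotone φ) (h1 : 0 < φ 1)
    (hid : φ 1 * φ (testP K α) = ∑ k, φ (testQ K α k) ^ 2)
    (hsub' : ∀ f g, ψ (f + g) ≤ ψ f + ψ g) (hpos' : ∀ a : ℝ, 0 ≤ a → ∀ f, ψ (a • f) = a * ψ f)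
    (htr' : ∀ (a : ℝ) f, ψ (f + a • 1) = ψ f + a * ψ 1)
    (hmono' : Monotone ψ) (f : C(K, ℝ)) (ε δ : ℝ) (hε : 0 < ε) (hδ : 0 ≤ δ)
    (hf : ∀ s x : K,
      |f x - f s| ≤ ε + δ * korD K α (fun k => (s : EuclideanSpace ℝ (Fin N)) k + α) x)
    (B : ℝ) (hB : ∀ (s : K) k, (s : EuclideanSpace ℝ (Fin N)) k + α ≤ B)
    (a c m : ℝ) (b : Fin N → ℝ) (hm : φ 1 ≤ m) (ha : |ψ 1 - φ 1| ≤ a)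
    (hb : ∀ k, |ψ (testQ K α k) - φ (testQ K α k)| ≤ b k)
    (hc : |ψ (testP K α) - φ (testP K α)| ≤ c) :
    |ψ f - φ f| ≤ ‖f‖ * a + ε * (2 * m + a)
      + δ * (c + ∑ k, 2 * B * b k + (∑ _k : Fin N, B ^ 2) * a) := by
  obtain ⟨s, hs⟩ := kor_point K α hα φ hsub hpos hmono h1 hid
  have hσ := fun k => kor_pos K α hα s k
  have hσB := fun k => hB s k
  have hfs := hf s
  generalize hσdef : (fun k => (s : EuclideanSpace ℝ (Fin N)) k + α) = σ at hfs
  have e : ∀ k, (s : EuclideanSpace ℝ (Fin N)) k + α = σ k := fun k => congrFun hσdef k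
  simp only [e] at hs hσ hσB
  have p1 := kor_pt K α σ φ hsub hpos htr hmono f (f s) ε δ hδ hfs
  have p2 := kor_pt K α σ ψ hsub' hpos' htr' hmono' f (f s) ε δ hδ hfs
  have d1 := korD_le K α σ hσ φ hsub hpos
  have d2 := korD_le K α σ hσ ψ hsub' hpos'
  rw [hs] at d1
  have ha0 : 0 ≤ a := (abs_nonneg _).trans ha
  have d3 : ψ (korD K α σ) ≤ c + ∑ k, 2 * B * b k + (∑ _k : Fin N, B ^ 2) * a := by
    have q1 : ∑ k, 2 * σ k * ψ (testQ K α k) - ∑ k, 2 * σ k * φ (testQ K α k)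
        ≤ ∑ k, 2 * B * b k := by
      rw [← Finset.sum_sub_distrib]
      refine Finset.sum_le_sum fun k _ => ?_
      have x1 := (le_abs_self _).trans (hb k)
      have x2 := (abs_nonneg _).trans (hb k)
      have x3 := hσ k
      have x4 := hσB k
      calc _ = 2 * σ k * (ψ (testQ K α k) - φ (testQ K α k)) := by ring
        _ ≤ 2 * σ k * b k := by gcongr
        _ ≤ _ := by gcongr
    have q2 : (∑ k, σ k ^ 2) * ψ 1 - (∑ k, σ k ^ 2) * φ 1 ≤ (∑ _k : Fin N, B ^ 2) * a := by
      have x1 := (le_abs_self _).trans ha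
      have x2 : ∑ k, σ k ^ 2 ≤ ∑ _k : Fin N, B ^ 2 := Finset.sum_le_sum fun k _ =>
        pow_le_pow_left₀ (hσ k) (hσB k) 2
      have x3 : 0 ≤ ∑ k, σ k ^ 2 := Finset.sum_nonneg fun k _ => sq_nonneg _
      rw [← mul_sub]
      calc _ ≤ (∑ k, σ k ^ 2) * a := by gcongr
        _ ≤ _ := by gcongr
    have q3 := (le_abs_self _).trans hc
    linarith
  have d4 := mul_le_mul_of_nonneg_left d3 hδ
  have d5 := mul_le_mul_of_nonneg_left d1 hδ
  have d6 : |f s * ψ 1 - f s * φ 1| ≤ ‖f‖ * a := by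
    rw [← mul_sub, abs_mul]
    have := f.norm_coe_le_norm s
    rw [Real.norm_eq_abs] at this
    gcongr
  have d7 : ε * (ψ 1 + φ 1) ≤ ε * (2 * m + a) := by
    have := (le_abs_self _).trans ha
    exact mul_le_mul_of_nonneg_left (by linarith) hε.le
  rw [abs_le] at p1 p2 d6 ⊢
  constructor <;> linarith

/-- **Korovkin-type theorem on an ordered Banach space containing `C(K)` densely
(Theorem 4).** Let `i : C(K) → E` be an injective positive linear map with dense image into an
ordered Banach space `E`, let `T_n, A : E → C(X)` be sublinear, monotone operators,
translatable with respect to `e = i 1`, with `A(e)` strictly positive,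
`A(e)·A(i p) = Σ_k (A(i q_k))²` for some `α ≥ α(K,u)`, and `sup_n ‖T_n‖ < ∞`. Then
`‖T_n f − A f‖ → 0` for all `f ∈ E` iff it holds for the `N + 2` test elements
`e, i q_1, …, i q_N, i p`. -/
theorem korovkin_ordered_banach_space
    {N : ℕ} (K : Set (EuclideanSpace ℝ (Fin N))) [CompactSpace K]
    {E : Type*} [NormedAddCommGroup E] [NormedSpace ℝ E] [CompleteSpace E] [PartialOrder E]
    (hadd : ∀ x y z : E, x ≤ y → x + z ≤ y + z)
    (hsmulE : ∀ (c : ℝ) (x y : E), 0 ≤ c → x ≤ y → c • x ≤ c • y)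
    (hclosed : IsClosed {x : E | 0 ≤ x})
    (hgen : ∀ x : E, ∃ u v : E, 0 ≤ u ∧ 0 ≤ v ∧ x = u - v)
    (hnormmono : ∀ x y : E, 0 ≤ x → x ≤ y → ‖x‖ ≤ ‖y‖)
    (i : C(K, ℝ) →ₗ[ℝ] E) (hi : Function.Injective i)
    (hipos : ∀ f : C(K, ℝ), 0 ≤ f → 0 ≤ i f) (hidense : DenseRange i)
    {X : Type*} [TopologicalSpace X] [CompactSpace X] [T2Space X]
    (T : ℕ → E → C(X, ℝ)) (A : E → C(X, ℝ))
    (hTsub : ∀ n, ∀ f g : E, T n (f + g) ≤ T n f + T n g)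
    (hTpos : ∀ n, ∀ (a : ℝ), 0 ≤ a → ∀ f : E, T n (a • f) = a • T n f)
    (hTtr : ∀ n, ∀ f : E, ∀ a : ℝ, 0 ≤ a → T n (f + a • i 1) = T n f + a • T n (i 1))
    (hTmono : ∀ n, Monotone (T n))
    (hAsub : ∀ f g : E, A (f + g) ≤ A f + A g)
    (hApos : ∀ (a : ℝ), 0 ≤ a → ∀ f : E, A (a • f) = a • A f)
    (hAtr : ∀ f : E, ∀ a : ℝ, 0 ≤ a → A (f + a • i 1) = A f + a • A (i 1))
    (hAmono : Monotone A)
    (hAepos : ∀ t : X, 0 < A (i 1) t)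
    (α : ℝ) (hα : posDeficit K ≤ α)
    (hAfe : A (i 1) * A (i (testP K α)) = ∑ k : Fin N, (A (i (testQ K α k))) ^ 2)
    (hTbdd : ∃ M : ℝ, ∀ n, ∀ f : E, ‖f‖ ≤ 1 → ‖T n f‖ ≤ M) :
    (∀ f : E, Tendsto (fun n => ‖T n f - A f‖) atTop (nhds 0)) ↔
      (Tendsto (fun n => ‖T n (i 1) - A (i 1)‖) atTop (nhds 0) ∧
       (∀ k : Fin N, Tendsto (fun n => ‖T n (i (testQ K α k)) - A (i (testQ K α k))‖)
          atTop (nhds 0)) ∧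
       Tendsto (fun n => ‖T n (i (testP K α)) - A (i (testP K α))‖) atTop (nhds 0)) := by
  have hOA : IsOrderedAddMonoid E := { add_le_add_left := fun a b h c => hadd a b c h }
  have hOC : OrderClosedTopology E := ⟨by
    have : {p : E × E | p.1 ≤ p.2} = (fun p : E × E => p.2 - p.1) ⁻¹' {x : E | 0 ≤ x} := by
      ext p; simp
    rw [this]
    exact hclosed.preimage (by fun_prop)⟩
  have hsm : ∀ (c : ℝ) (x : E), 0 ≤ c → 0 ≤ x → 0 ≤ c • x := fun c x hc hx => by
    simpa using hsmulE c 0 x hc hx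
  have himono : Monotone i := fun f g h => by
    have := hipos (g - f) (sub_nonneg.2 h)
    rw [map_sub] at this
    exact sub_nonneg.1 this
  refine ⟨fun h => ⟨h _, fun k => h _, h _⟩, fun ⟨he, hq, hp⟩ => ?_⟩
  obtain ⟨MA, hMA0, hMA⟩ := kor_bdd hsm hgen A hAsub hApos hAmono
  obtain ⟨MT, hMT0, hMT⟩ : ∃ M : ℝ, 0 ≤ M ∧ ∀ n f, ‖T n f‖ ≤ M * ‖f‖ := by
    obtain ⟨M, hM⟩ := hTbdd
    refine ⟨M, (norm_nonneg _).trans (hM 0 0 (by simp)), fun n f => ?_⟩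
    by_cases h0 : f = 0
    · have : T n 0 = 0 := by simpa using hTpos n 0 le_rfl 0
      simp [h0, this]
    have hne : 0 < ‖f‖ := norm_pos_iff.2 h0
    have h1 := hM n (‖f‖⁻¹ • f) (by
      rw [norm_smul, norm_inv, norm_norm, inv_mul_cancel₀ hne.ne'])
    rw [hTpos _ _ (by positivity), norm_smul, norm_inv, norm_norm, inv_mul_le_iff₀ hne] at h1
    linarith
  have htrall : ∀ S : E → C(X, ℝ),
      (∀ f : E, ∀ a : ℝ, 0 ≤ a → S (f + a • i 1) = S f + a • S (i 1)) →
      ∀ (t : X) (a : ℝ) (f : C(K, ℝ)), S (i (f + a • 1)) t = S (i f) t + a * S (i 1) t := by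
    intro S hS t a f
    rw [map_add, map_smul]
    rcases le_total 0 a with h | h
    · rw [hS _ _ h]; rfl
    · have := hS (i f + a • i 1) (-a) (by linarith)
      rw [neg_smul, add_neg_cancel_right] at this
      rw [this]
      show _ = S (i f + a • i 1) t + (-a) * S (i 1) t + a * S (i 1) t
      ring
  obtain ⟨B, hB⟩ : ∃ B : ℝ, ∀ (s : K) k, (s : EuclideanSpace ℝ (Fin N)) k + α ≤ B := by
    have hK : IsCompact K := isCompact_iff_compactSpace.2 inferInstance
    obtain ⟨R, hR⟩ := hK.isBounded.exists_norm_le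
    refine ⟨R + α, fun s k => ?_⟩
    have h1 := PiLp.norm_apply_le (s : EuclideanSpace ℝ (Fin N)) k
    have h2 := hR s s.2
    have h3 := (le_abs_self _).trans h1
    linarith
  have hCK : ∀ f : C(K, ℝ), Tendsto (fun n => ‖T n (i f) - A (i f)‖) atTop (nhds 0) := by
    intro f
    rw [Metric.tendsto_atTop']
    by_contra! hcon
    obtain ⟨η, hη, hcon⟩ := hcon
    let ε : ℝ := η / (4 * ‖A (i 1)‖ + 1)
    have hε : 0 < ε := by positivity
    obtain ⟨δ, hδ, hmod⟩ := kor_modulus K α f ε hε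
    have hlim : Tendsto (fun n => ‖f‖ * ‖T n (i 1) - A (i 1)‖
        + ε * (2 * ‖A (i 1)‖ + ‖T n (i 1) - A (i 1)‖)
        + δ * (‖T n (i (testP K α)) - A (i (testP K α))‖
          + ∑ k, 2 * B * ‖T n (i (testQ K α k)) - A (i (testQ K α k))‖
          + (∑ _k : Fin N, B ^ 2) * ‖T n (i 1) - A (i 1)‖)) atTop
        (nhds (‖f‖ * 0 + ε * (2 * ‖A (i 1)‖ + 0)
          + δ * (0 + ∑ k : Fin N, 2 * B * 0 + (∑ _k : Fin N, B ^ 2) * 0))) :=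
      ((he.const_mul _).add ((he.const_add _).const_mul _)).add
        (((hp.add (tendsto_finsetSum _ fun k _ => (hq k).const_mul _)).add
          (he.const_mul _)).const_mul _)
    have hlt : ‖f‖ * 0 + ε * (2 * ‖A (i 1)‖ + 0)
          + δ * (0 + ∑ k : Fin N, 2 * B * 0 + (∑ _k : Fin N, B ^ 2) * 0) < η := by
      have : ε * (2 * ‖A (i 1)‖) < η := by
        simp only [ε]
        rw [div_mul_eq_mul_div, div_lt_iff₀ (by positivity)]
        have := norm_nonneg (A (i 1))
        nlinarith
      simpa using this
    obtain ⟨n0, hn0⟩ := eventually_atTop.1 (hlim.eventually_lt_const hlt)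
    obtain ⟨n, hn, hn2⟩ := hcon n0
    have hlt2 := hn0 n hn.le
    rw [Real.dist_eq, sub_zero, abs_norm] at hn2
    refine absurd hn2 (not_le.2 (lt_of_le_of_lt ?_ hlt2))
    have est : ∀ t : X, |T n (i f) t - A (i f) t| ≤ _ := fun t =>
      kor_est K α hα (fun g => A (i g) t) (fun g => T n (i g) t)
        (fun f g => by rw [map_add]; exact hAsub _ _ t)
        (fun a ha f => by rw [map_smul, hApos _ ha]; rfl)
        (htrall A hAtr t) (fun f g h => hAmono (himono h) t) (hAepos t)
        (by
          have := congrArg (fun g : C(X, ℝ) => g t) hAfe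
          simpa using this)
        (fun f g => by rw [map_add]; exact hTsub n _ _ t)
        (fun a ha f => by rw [map_smul, hTpos n _ ha]; rfl)
        (htrall (T n) (hTtr n) t) (fun f g h => hTmono n (himono h) t) f ε δ hε hδ hmod B hB
        ‖T n (i 1) - A (i 1)‖ ‖T n (i (testP K α)) - A (i (testP K α))‖ ‖A (i 1)‖
        (fun k => ‖T n (i (testQ K α k)) - A (i (testQ K α k))‖)
        ((le_abs_self _).trans ((A (i 1)).norm_coe_le_norm t))
        ((T n (i 1) - A (i 1)).norm_coe_le_norm t)
        (fun k => (T n (i (testQ K α k)) - A (i (testQ K α k))).norm_coe_le_norm t)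
        ((T n (i (testP K α)) - A (i (testP K α))).norm_coe_le_norm t)
    rcases isEmpty_or_nonempty X with hX | hX
    · exfalso
      have : T n (i f) - A (i f) = 0 := by ext t; exact (hX.false t).elim
      rw [this, norm_zero] at hn2
      linarith
    · exact (ContinuousMap.norm_le_of_nonempty _).2 est
  intro f
  rw [Metric.tendsto_atTop]
  intro η hη
  obtain ⟨g, hg⟩ := Metric.denseRange_iff.1 hidense f (η / (2 * (MA + MT + 1))) (by positivity)
  obtain ⟨n0, hn0⟩ := Metric.tendsto_atTop.1 (hCK g) (η / 2) (by positivity)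
  refine ⟨n0, fun n hn => ?_⟩
  have h1 := hn0 n hn
  rw [Real.dist_eq, sub_zero, abs_norm] at h1 ⊢
  have h2 := kor_lip (T n) (hTsub n) MT (hMT n) f (i g)
  have h3 := kor_lip A hAsub MA hMA (i g) f
  rw [norm_sub_rev] at h3
  rw [dist_eq_norm, lt_div_iff₀ (by positivity)] at hg
  have h4 : T n f - A f = (T n f - T n (i g)) + (T n (i g) - A (i g)) + (A (i g) - A f) := by abel
  rw [h4]
  have h5 := norm_add₃_le (a := T n f - T n (i g)) (b := T n (i g) - A (i g)) (c := A (i g) - A f)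
  rw [norm_sub_rev (i g) f, norm_sub_rev (A f)] at h3
  have := norm_nonneg (f - i g)
  nlinarith
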